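/- arXiv:2604.13486 — 2 statements merged into one kernel-verified Lean document; each statement's English description precedes it below -/
import Mathlib

section
/- Let ψ₀ be a unit vector in (ℂ²)^{⊗N}, set d = 2^N, and let A ∈ M_d(ℂ) be Hermitian with Pauli decomposition A = Σ_{i∈{0,1,2,3}^N} a_i P_i, where P_i = ⊗_{r=1}^N P_{i_r} (with P₀=I₂, P₁=X, P₂=Y, P₃=Z) and a_i = Tr(A·P_i)/d. Let U₁, …, U_N be independent Haar-random elements of U(2) and ψ = (⊗_{i=1}^N U_i)ψ₀. Then E[⟨ψ|A|ψ⟩²] = (Tr(A)/d)² + Σ_{i≠(0,…,0)} a_i² · Tr( |ψ₀⟩⟨ψ₀|^{⊗2} · ⊗_{r=1}^N T_{i_r} ), where for each qubit r the operator T_{i_r} acts on the two copies of the r-th qubit factor (one copy in each tensor copy of (ℂ²)^{⊗N}) and equals 𝕀 (the identity on ℂ²⊗ℂ²) if i_r = 0 and equals (2𝔽 − 𝕀)/3 if i_r ≠ 0, with 𝔽 the swap operator on ℂ²⊗ℂ². -/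
open Matrix MeasureTheory

noncomputable section

/-- The four single-qubit Pauli matrices `I₂, X, Y, Z`. -/
def pauli : Fin 4 → Matrix (Fin 2) (Fin 2) ℂ
  | 0 => 1
  | 1 => !![0, 1; 1, 0]
  | 2 => !![0, -Complex.I; Complex.I, 0]
  | 3 => !![1, 0; 0, -1]

/-- The `N`-qubit Pauli string `⊗_{r=1}^N P_{i r}` on `(ℂ²)^{⊗N} ≅ ℂ^{2^N}`. -/
def pauliString (N : ℕ) (i : Fin N → Fin 4) :
    Matrix (Fin N → Fin 2) (Fin N → Fin 2) ℂ :=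
  fun x y => ∏ r, pauli (i r) (x r) (y r)

/-- The tensor product `⊗_{i=1}^N U_i` of single-qubit unitaries. -/
def tensorU (N : ℕ) (U : Fin N → Matrix.unitaryGroup (Fin 2) ℂ) :
    Matrix (Fin N → Fin 2) (Fin N → Fin 2) ℂ :=
  fun x y => ∏ i, (U i : Matrix (Fin 2) (Fin 2) ℂ) (x i) (y i)

/-- The operator `⊗_{r=1}^N T_{i_r}` on `((ℂ²)^{⊗N})^{⊗2}`, where on the pair of
copies of qubit `r` the factor `T_{i_r}` is the identity `𝕀` if `i_r = 0` and
`(2𝔽 − 𝕀)/3` otherwise (`𝔽` the swap on `ℂ²⊗ℂ²`).  The first components of the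
indices refer to the first tensor copy, and the second components to the second. -/
def pairOp (N : ℕ) (i : Fin N → Fin 4) :
    Matrix ((Fin N → Fin 2) × (Fin N → Fin 2)) ((Fin N → Fin 2) × (Fin N → Fin 2)) ℂ :=
  fun x y => ∏ r,
    if i r = 0 then (if x.1 r = y.1 r ∧ x.2 r = y.2 r then (1 : ℂ) else 0)
    else (2 * (if x.1 r = y.2 r ∧ x.2 r = y.1 r then (1 : ℂ) else 0)
            - (if x.1 r = y.1 r ∧ x.2 r = y.2 r then (1 : ℂ) else 0)) / 3

/-- The operator `|ψ₀⟩⟨ψ₀|^{⊗2}` on `((ℂ²)^{⊗N})^{⊗2}`. -/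
def projTwo (N : ℕ) (ψ₀ : (Fin N → Fin 2) → ℂ) :
    Matrix ((Fin N → Fin 2) × (Fin N → Fin 2)) ((Fin N → Fin 2) × (Fin N → Fin 2)) ℂ :=
  fun x y => ψ₀ x.1 * ψ₀ x.2 * (starRingEnd ℂ (ψ₀ y.1) * starRingEnd ℂ (ψ₀ y.2))

/-- Conjugated Pauli `U† P_k U`. -/
def cj (k : Fin 4) (U : Matrix.unitaryGroup (Fin 2) ℂ) : Matrix (Fin 2) (Fin 2) ℂ :=
  star (U : Matrix (Fin 2) (Fin 2) ℂ) * pauli k * (U : Matrix (Fin 2) (Fin 2) ℂ)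

lemma cj_continuous (k : Fin 4) (x y : Fin 2) : Continuous fun U => cj k U x y := by
  have h : Continuous fun U => cj k U := by
    unfold cj
    exact ((continuous_subtype_val.star).matrix_mul continuous_const).matrix_mul
      continuous_subtype_val
  exact h.matrix_elem x y

lemma cj_bound (k : Fin 4) (x y : Fin 2) :
    ∃ C : ℝ, ∀ U, ‖cj k U x y‖ ≤ C := by
  refine ⟨∑ j : Fin 2, ∑ i : Fin 2, 1 * ‖pauli k i j‖ * 1, fun U => ?_⟩
  unfold cj
  simp only [Matrix.mul_apply, Finset.sum_mul]
  refine (norm_sum_le _ _).trans (Finset.sum_le_sum fun j _ => ?_)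
  refine (norm_sum_le _ _).trans (Finset.sum_le_sum fun i _ => ?_)
  rw [norm_mul, norm_mul, Matrix.star_apply, norm_star]
  have h1 := entry_norm_bound_of_unitary U.2 i x
  have h2 := entry_norm_bound_of_unitary U.2 j y
  gcongr

lemma cj_mul (k k' : Fin 4) (c : ℂ) (V U : Matrix.unitaryGroup (Fin 2) ℂ)
    (h : cj k V = c • pauli k') : cj k (V * U) = c • cj k' U := by
  have : cj k (V * U) = star (U : Matrix (Fin 2) (Fin 2) ℂ) * cj k V * U := by
    simp [cj, Matrix.mul_assoc]
  rw [this, h]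
  simp [cj]

section
variable [MeasurableSpace (Matrix.unitaryGroup (Fin 2) ℂ)]
    [BorelSpace (Matrix.unitaryGroup (Fin 2) ℂ)]
    (μ : Measure (Matrix.unitaryGroup (Fin 2) ℂ))

/-- Second moments. -/
def mom (k l : Fin 4) (x y x' y' : Fin 2) : ℂ :=
  ∫ U, cj k U x y * cj l U x' y' ∂μ

lemma cj_integrable [IsProbabilityMeasure μ] (k l : Fin 4) (x y x' y' : Fin 2) :
    Integrable (fun U => cj k U x y * cj l U x' y') μ := by
  obtain ⟨C, hC⟩ := cj_bound k x y
  obtain ⟨D, hD⟩ := cj_bound l x' y'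
  refine Integrable.of_bound
    ((cj_continuous k x y).mul (cj_continuous l x' y')).measurable.aestronglyMeasurable (C * D)
    (Filter.Eventually.of_forall fun U => ?_)
  rw [norm_mul]
  exact mul_le_mul (hC U) (hD U) (norm_nonneg _) ((norm_nonneg _).trans (hC U))

lemma mom_inv [μ.IsMulLeftInvariant] (V : Matrix.unitaryGroup (Fin 2) ℂ)
    (k l k' l' : Fin 4) (c c' : ℂ) (h : cj k V = c • pauli k') (h' : cj l V = c' • pauli l')
    (x y x' y' : Fin 2) : mom μ k l x y x' y' = c * c' * mom μ k' l' x y x' y' := by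
  unfold mom
  rw [← integral_mul_left_eq_self (fun U => cj k U x y * cj l U x' y') V, ← integral_const_mul]
  congr 1
  funext U
  rw [cj_mul k k' c V U h, cj_mul l l' c' V U h']
  simp only [Matrix.smul_apply, smul_eq_mul]
  ring

/-- Paulis as unitaries. -/
def pU (m : Fin 4) : Matrix.unitaryGroup (Fin 2) ℂ :=
  ⟨pauli m, by
    rw [Matrix.mem_unitaryGroup_iff]
    ext i j
    fin_cases m <;> fin_cases i <;> fin_cases j <;>
      simp [pauli, Matrix.mul_apply, Fin.sum_univ_two, Matrix.star_apply, Matrix.one_apply]⟩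

/-- Sign. -/
def sg (m k : Fin 4) : ℂ := if m = 0 ∨ k = 0 ∨ m = k then 1 else -1

lemma cj_pU (m k : Fin 4) : cj k (pU m) = sg m k • pauli k := by
  ext i j
  fin_cases m <;> fin_cases k <;> fin_cases i <;> fin_cases j <;>
      simp [cj, pU, sg, pauli, Matrix.mul_apply, Fin.sum_univ_two, Matrix.star_apply,
        Matrix.one_apply]

/-- The order three Clifford. -/
def clif : Matrix.unitaryGroup (Fin 2) ℂ :=
  ⟨!![(1 + Complex.I) / 2, (1 + Complex.I) / 2; (Complex.I - 1) / 2, (1 - Complex.I) / 2], by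
    rw [Matrix.mem_unitaryGroup_iff]
    ext i j
    fin_cases i <;> fin_cases j <;>
      simp [Matrix.mul_apply, Fin.sum_univ_two, Matrix.star_apply, Complex.conj_ofNat] <;>
      ring_nf <;> simp <;> norm_num⟩

lemma mom_ne [μ.IsMulLeftInvariant] (k l : Fin 4) (hkl : k ≠ l)
    (x y x' y' : Fin 2) : mom μ k l x y x' y' = 0 := by
  have key : ∃ m, sg m k * sg m l = -1 := by
    revert hkl
    fin_cases k <;> fin_cases l <;> intro hkl <;> first
      | exact absurd rfl hkl
      | (refine ⟨1, ?_⟩; simp [sg]; done)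
      | (refine ⟨2, ?_⟩; simp [sg]; done)
  obtain ⟨m, hm⟩ := key
  have := mom_inv μ (pU m) k l k l _ _ (cj_pU m k) (cj_pU m l) x y x' y'
  rw [hm] at this
  linear_combination this / 2

/-- The single-pair operator. -/
def tt (k : Fin 4) (x x' y y' : Fin 2) : ℂ :=
    if k = 0 then (if x = y ∧ x' = y' then (1 : ℂ) else 0)
    else (2 * (if x = y' ∧ x' = y then (1 : ℂ) else 0)
            - (if x = y ∧ x' = y' then (1 : ℂ) else 0)) / 3

lemma cj_zero (U : Matrix.unitaryGroup (Fin 2) ℂ) : cj 0 U = 1 := by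
  simp [cj, pauli]

lemma swap_expand (U : Matrix.unitaryGroup (Fin 2) ℂ) (x y x' y' : Fin 2) :
    cj 1 U x y * cj 1 U x' y' + cj 2 U x y * cj 2 U x' y' + cj 3 U x y * cj 3 U x' y'
      = 3 * tt 1 x x' y y' := by
  have hU : star (U : Matrix (Fin 2) (Fin 2) ℂ) * (U : Matrix (Fin 2) (Fin 2) ℂ) = 1 :=
    (Matrix.mem_unitaryGroup_iff').1 U.2
  have e : ∀ i j, (star (U : Matrix (Fin 2) (Fin 2) ℂ)) i 0 * U.1 0 j +
      (star (U : Matrix (Fin 2) (Fin 2) ℂ)) i 1 * U.1 1 j = if i = j then 1 else 0 := by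
    intro i j
    have := congrFun (congrFun hU i) j
    rwa [Matrix.mul_apply, Fin.sum_univ_two, Matrix.one_apply] at this
  have t : 3 * tt 1 x x' y y' = 2 * ((if x = y' then 1 else 0) * (if x' = y then 1 else 0))
      - (if x = y then 1 else 0) * (if x' = y' then 1 else 0) := by
    simp only [tt, one_ne_zero, if_false, ite_and, ite_mul, one_mul, zero_mul]
    ring
  rw [t, ← e, ← e, ← e, ← e]
  simp only [cj, pauli, Matrix.mul_apply, Fin.sum_univ_two]
  simp
  ring_nf
  simp
  ring

lemma mom_eq [IsProbabilityMeasure μ] [μ.IsMulLeftInvariant] (k : Fin 4)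
    (x y x' y' : Fin 2) : mom μ k k x y x' y' = tt k x x' y y' := by
  have c1 : cj 1 clif = (1 : ℂ) • pauli 2 := by
    ext i j
    fin_cases i <;> fin_cases j <;>
      simp [cj, clif, pauli, Matrix.mul_apply, Fin.sum_univ_two, Matrix.star_apply,
        Complex.conj_ofNat] <;> ring_nf <;> simp <;> ring
  have c2 : cj 2 clif = (1 : ℂ) • pauli 3 := by
    ext i j
    fin_cases i <;> fin_cases j <;>
      simp [cj, clif, pauli, Matrix.mul_apply, Fin.sum_univ_two, Matrix.star_apply,
        Complex.conj_ofNat] <;> ring_nf <;> simp <;> ring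
  have h12 := mom_inv μ clif 1 1 2 2 1 1 c1 c1 x y x' y'
  have h23 := mom_inv μ clif 2 2 3 3 1 1 c2 c2 x y x' y'
  have hs : mom μ 1 1 x y x' y' + mom μ 2 2 x y x' y' + mom μ 3 3 x y x' y'
      = 3 * tt 1 x x' y y' := by
    unfold mom
    rw [← integral_add (cj_integrable μ _ _ _ _ _ _) (cj_integrable μ _ _ _ _ _ _),
      ← integral_add (f := fun U => cj 1 U x y * cj 1 U x' y' + cj 2 U x y * cj 2 U x' y')
        ((cj_integrable μ _ _ _ _ _ _).add (cj_integrable μ _ _ _ _ _ _))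
        (cj_integrable μ _ _ _ _ _ _)]
    simp only [swap_expand, integral_const, probReal_univ, one_smul]
  have e2 : tt 2 x x' y y' = tt 1 x x' y y' := by simp [tt]
  have e3 : tt 3 x x' y y' = tt 1 x x' y y' := by simp [tt]
  fin_cases k
  · change mom μ 0 0 x y x' y' = tt 0 x x' y y'
    simp [mom, cj_zero, tt, Matrix.one_apply, ite_and]
    split_ifs <;> rfl
  · change mom μ 1 1 x y x' y' = tt 1 x x' y y'
    linear_combination hs / 3 + 2 / 3 * h12 + 1 / 3 * h23
  · change mom μ 2 2 x y x' y' = tt 2 x x' y y'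
    linear_combination hs / 3 - 1 / 3 * h12 + 1 / 3 * h23 - e2
  · change mom μ 3 3 x y x' y' = tt 3 x x' y y'
    linear_combination hs / 3 - 1 / 3 * h12 - 2 / 3 * h23 - e3

end

lemma expand (N : ℕ) (ψ₀ : (Fin N → Fin 2) → ℂ) (i : Fin N → Fin 4)
    (U : Fin N → Matrix.unitaryGroup (Fin 2) ℂ) :
    star ((tensorU N U).mulVec ψ₀) ⬝ᵥ (pauliString N i).mulVec ((tensorU N U).mulVec ψ₀)
      = ∑ x, ∑ y, star (ψ₀ x) * ψ₀ y * ∏ r, cj (i r) (U r) (x r) (y r) := by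
  have h : star (tensorU N U) * pauliString N i * tensorU N U
      = fun x y => ∏ r, cj (i r) (U r) (x r) (y r) := by
    ext x y
    simp only [cj, Matrix.mul_apply, Finset.sum_mul, tensorU, pauliString, Matrix.star_apply]
    simp only [star_prod, ← Finset.prod_mul_distrib]
    simp only [Finset.prod_univ_sum, Fintype.piFinset_univ]
  rw [Matrix.star_mulVec, ← Matrix.dotProduct_mulVec, Matrix.mulVec_mulVec, Matrix.mulVec_mulVec,
    ← Matrix.star_eq_conjTranspose, h]
  simp only [dotProduct, Matrix.mulVec, Finset.mul_sum, Pi.star_apply]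
  refine Finset.sum_congr rfl fun x _ => Finset.sum_congr rfl fun y _ => ?_
  ring


lemma pauliString_zero (N : ℕ) : pauliString N (fun _ => 0) = 1 := by
  ext x y
  simp only [pauliString, pauli, Matrix.one_apply]
  rw [Finset.prod_ite_zero]
  simp [funext_iff]

lemma pairOp_zero (N : ℕ) : pairOp N (fun _ => 0) = 1 := by
  ext x y
  simp only [pairOp, Matrix.one_apply, if_true]
  rw [Finset.prod_ite_zero]
  simp [funext_iff, Prod.ext_iff, forall_and]

lemma trace_projTwo (N : ℕ) (ψ₀ : (Fin N → Fin 2) → ℂ) (hψ₀ : star ψ₀ ⬝ᵥ ψ₀ = 1) :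
    (projTwo N ψ₀).trace = 1 := by
  have : (projTwo N ψ₀).trace = (star ψ₀ ⬝ᵥ ψ₀) * (star ψ₀ ⬝ᵥ ψ₀) := by
    simp only [Matrix.trace, Matrix.diag, projTwo, dotProduct, Finset.sum_mul_sum,
      Fintype.sum_prod_type, Pi.star_apply, RCLike.star_def]
    refine Finset.sum_congr rfl fun x _ => Finset.sum_congr rfl fun y _ => ?_
    ring
  rw [this, hψ₀, one_mul]

/-- Second moment of `⟨ψ|A|ψ⟩` for `ψ = (⊗ᵢUᵢ)ψ₀` with independent Haar-random
single-qubit unitaries `Uᵢ`: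
`E[⟨ψ|A|ψ⟩²] = (Tr A/d)² + Σ_{i≠0} a_i² Tr(|ψ₀⟩⟨ψ₀|^{⊗2} ⊗_r T_{i_r})`,
where `a_i = Tr(A·P_i)/d` are the Pauli coefficients of the Hermitian matrix `A`
and `d = 2^N`.  The Haar probability measure on `U(2)` is any left-invariant
Borel probability measure `μ`. -/
theorem stmt_6 (N : ℕ) (hN : 1 ≤ N)
    [MeasurableSpace (Matrix.unitaryGroup (Fin 2) ℂ)]
    [BorelSpace (Matrix.unitaryGroup (Fin 2) ℂ)]
    (μ : Measure (Matrix.unitaryGroup (Fin 2) ℂ))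
    [IsProbabilityMeasure μ] [μ.IsMulLeftInvariant]
    (ψ₀ : (Fin N → Fin 2) → ℂ) (hψ₀ : star ψ₀ ⬝ᵥ ψ₀ = 1)
    (A : Matrix (Fin N → Fin 2) (Fin N → Fin 2) ℂ) (hA : A.IsHermitian)
    (a : (Fin N → Fin 4) → ℂ)
    (ha : ∀ i, a i = (A * pauliString N i).trace / 2 ^ N)
    (hdecomp : A = ∑ i : Fin N → Fin 4, a i • pauliString N i) :
    (∫ U : Fin N → Matrix.unitaryGroup (Fin 2) ℂ,
        (star ((tensorU N U).mulVec ψ₀) ⬝ᵥ A.mulVec ((tensorU N U).mulVec ψ₀)) ^ 2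
        ∂(Measure.pi fun _ => μ))
      = (A.trace / 2 ^ N) ^ 2
        + ∑ i ∈ Finset.univ.filter (fun i : Fin N → Fin 4 => i ≠ fun _ => 0),
            a i ^ 2 * (projTwo N ψ₀ * pairOp N i).trace := by
  classical
  set ν : Measure (Fin N → Matrix.unitaryGroup (Fin 2) ℂ) := Measure.pi fun _ => μ with hν
  -- the integrand
  have hI : ∀ U : Fin N → Matrix.unitaryGroup (Fin 2) ℂ,
      (star ((tensorU N U).mulVec ψ₀) ⬝ᵥ A.mulVec ((tensorU N U).mulVec ψ₀)) ^ 2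
      = ∑ i, ∑ j, ∑ x, ∑ y, ∑ x', ∑ y',
          (a i * a j * (star (ψ₀ x) * ψ₀ y * (star (ψ₀ x') * ψ₀ y'))) *
          ∏ r, (cj (i r) (U r) (x r) (y r) * cj (j r) (U r) (x' r) (y' r)) := by
    intro U
    have h1 : star ((tensorU N U).mulVec ψ₀) ⬝ᵥ A.mulVec ((tensorU N U).mulVec ψ₀)
        = ∑ i, a i * ∑ x, ∑ y, star (ψ₀ x) * ψ₀ y * ∏ r, cj (i r) (U r) (x r) (y r) := by
      conv_lhs => rw [hdecomp]
      rw [Matrix.sum_mulVec, dotProduct_sum]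
      refine Finset.sum_congr rfl fun i _ => ?_
      rw [Matrix.smul_mulVec, dotProduct_smul, expand, smul_eq_mul]
    rw [h1, sq, Finset.sum_mul_sum]
    refine Finset.sum_congr rfl fun i _ => Finset.sum_congr rfl fun j _ => ?_
    rw [mul_mul_mul_comm, Finset.sum_mul, Finset.mul_sum]
    refine Finset.sum_congr rfl fun x _ => ?_
    rw [Finset.sum_mul, Finset.mul_sum]
    refine Finset.sum_congr rfl fun y _ => ?_
    rw [Finset.mul_sum, Finset.mul_sum]
    refine Finset.sum_congr rfl fun x' _ => ?_
    rw [Finset.mul_sum, Finset.mul_sum]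
    refine Finset.sum_congr rfl fun y' _ => ?_
    rw [Finset.prod_mul_distrib]
    ring
  have hint : ∀ (i j : Fin N → Fin 4) (x y x' y' : Fin N → Fin 2) (c : ℂ),
      Integrable (fun U : Fin N → Matrix.unitaryGroup (Fin 2) ℂ =>
        c * ∏ r, (cj (i r) (U r) (x r) (y r) * cj (j r) (U r) (x' r) (y' r))) ν := by
    intro i j x y x' y' c
    refine Integrable.const_mul ?_ c
    exact Integrable.fintype_prod
      (f := fun r U => cj (i r) U (x r) (y r) * cj (j r) U (x' r) (y' r))
      (fun r => cj_integrable μ _ _ _ _ _ _)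
  have hval : ∀ (i j : Fin N → Fin 4) (x y x' y' : Fin N → Fin 2) (c : ℂ),
      ∫ U, c * ∏ r, (cj (i r) (U r) (x r) (y r) * cj (j r) (U r) (x' r) (y' r)) ∂ν
        = if i = j then c * pairOp N i (x, x') (y, y') else 0 := by
    intro i j x y x' y' c
    rw [integral_const_mul, hν, integral_fintype_prod_eq_prod
      (f := fun r U => cj (i r) U (x r) (y r) * cj (j r) U (x' r) (y' r))]
    change c * ∏ r, mom μ (i r) (j r) (x r) (y r) (x' r) (y' r) = _
    split_ifs with h
    · subst h
      simp only [mom_eq]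
      rfl
    · obtain ⟨r, hr⟩ := Function.ne_iff.1 h
      rw [Finset.prod_eq_zero (Finset.mem_univ r) (mom_ne μ _ _ hr _ _ _ _), mul_zero]
  have hmain : (∫ U : Fin N → Matrix.unitaryGroup (Fin 2) ℂ,
        (star ((tensorU N U).mulVec ψ₀) ⬝ᵥ A.mulVec ((tensorU N U).mulVec ψ₀)) ^ 2 ∂ν)
      = ∑ i, a i ^ 2 * (projTwo N ψ₀ * pairOp N i).trace := by
    simp only [hI]
    have hint1 := fun i j x y x' (c : (Fin N → Fin 2) → ℂ) => integrable_finsetSum Finset.univ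
      (fun y' _ => hint i j x y x' y' (c y'))
    have hint2 := fun i j x y (c : (Fin N → Fin 2) → (Fin N → Fin 2) → ℂ) => integrable_finsetSum Finset.univ
      (fun x' _ => hint1 i j x y x' (c x'))
    have hint3 := fun i j x (c : (Fin N → Fin 2) → (Fin N → Fin 2) → (Fin N → Fin 2) → ℂ) => integrable_finsetSum Finset.univ
      (fun y _ => hint2 i j x y (c y))
    have hint4 := fun i j (c : (Fin N → Fin 2) → (Fin N → Fin 2) → (Fin N → Fin 2) → (Fin N → Fin 2) → ℂ) => integrable_finsetSum Finset.univ
      (fun x _ => hint3 i j x (c x))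
    have hint5 := fun i (c : (Fin N → Fin 4) → (Fin N → Fin 2) → (Fin N → Fin 2) → (Fin N → Fin 2) → (Fin N → Fin 2) → ℂ) => integrable_finsetSum Finset.univ
      (fun j _ => hint4 i j (c j))
    rw [integral_finsetSum _ (fun i _ => hint5 i _)]
    refine Finset.sum_congr rfl fun i _ => ?_
    rw [integral_finsetSum _ (fun j _ => hint4 i j _)]
    have hj : ∀ j, (∫ U, ∑ x, ∑ y, ∑ x', ∑ y',
          (a i * a j * (star (ψ₀ x) * ψ₀ y * (star (ψ₀ x') * ψ₀ y'))) *
          ∏ r, (cj (i r) (U r) (x r) (y r) * cj (j r) (U r) (x' r) (y' r)) ∂ν)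
        = ∑ x, ∑ y, ∑ x', ∑ y', if i = j then
          (a i * a j * (star (ψ₀ x) * ψ₀ y * (star (ψ₀ x') * ψ₀ y'))) *
            pairOp N i (x, x') (y, y') else 0 := by
      intro j
      rw [integral_finsetSum _ (fun x _ => hint3 i j x _)]
      refine Finset.sum_congr rfl fun x _ => ?_
      rw [integral_finsetSum _ (fun y _ => hint2 i j x y _)]
      refine Finset.sum_congr rfl fun y _ => ?_
      rw [integral_finsetSum _ (fun x' _ => hint1 i j x y x' _)]
      refine Finset.sum_congr rfl fun x' _ => ?_
      rw [integral_finsetSum _ (fun y' _ => hint i j x y x' y' _)]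
      exact Finset.sum_congr rfl fun y' _ => hval _ _ _ _ _ _ _
    rw [Finset.sum_congr rfl fun j _ => hj j,
      Finset.sum_eq_single i (fun j _ hji => by simp [Ne.symm hji]) (by simp)]
    simp only [if_true, Matrix.trace, Matrix.diag, Matrix.mul_apply, projTwo,
      Fintype.sum_prod_type]
    have hr : ∑ x, ∑ y, ∑ x', ∑ y',
          (a i * a i * (star (ψ₀ x) * ψ₀ y * (star (ψ₀ x') * ψ₀ y'))) *
            pairOp N i (x, x') (y, y')
        = ∑ y, ∑ y', ∑ x, ∑ x',
          (a i * a i * (star (ψ₀ x) * ψ₀ y * (star (ψ₀ x') * ψ₀ y'))) *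
            pairOp N i (x, x') (y, y') := by
      rw [Finset.sum_comm]
      refine Finset.sum_congr rfl fun y _ => ?_
      rw [Finset.sum_comm' (t' := Finset.univ) (s' := fun _ => Finset.univ) (by simp)]
      rw [Finset.sum_comm]
      rw [Finset.sum_congr rfl fun x _ => Finset.sum_comm]
      rw [Finset.sum_comm]
    rw [hr]
    simp only [Finset.mul_sum]
    refine Finset.sum_congr rfl fun y _ => Finset.sum_congr rfl fun y' _ =>
      Finset.sum_congr rfl fun x _ => Finset.sum_congr rfl fun x' _ => ?_
    simp only [RCLike.star_def]
    ring
  rw [hmain, ← Finset.add_sum_erase _ _ (Finset.mem_univ (fun _ => (0 : Fin 4)))]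
  congr 1
  · rw [pairOp_zero, Matrix.mul_one, trace_projTwo N ψ₀ hψ₀, ha, pauliString_zero, Matrix.mul_one,
      mul_one]
  · refine Finset.sum_congr ?_ fun _ _ => rfl
    ext i
    simp
end
end

section
/- Let d ≥ 1 and M ∈ M_d(ℂ), and let ψ = U·e₀ be a Haar-random pure state in ℂ^d (U Haar-random in U(d), e₀ a fixed unit vector). Then E[⟨ψ|M|ψ⟩²] = ((Tr M)² + Tr(M²)) / (d(d+1)). -/
open Matrix MeasureTheory

section helpers

set_option linter.unusedSectionVars false

variable {d : ℕ} [MeasurableSpace (Matrix.unitaryGroup (Fin d) ℂ)]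
    [BorelSpace (Matrix.unitaryGroup (Fin d) ℂ)]

/-- the fourth order monomial -/
def mono4 (i j k l : Fin d) (x : Fin d → ℂ) : ℂ := star (x i) * x j * (star (x k) * x l)

lemma mono4_cont (i j k l : Fin d) : Continuous (mono4 i j k l) := by
  unfold mono4; fun_prop

lemma psi_cont (e₀ : Fin d → ℂ) : Continuous
    (fun U : Matrix.unitaryGroup (Fin d) ℂ => (U : Matrix (Fin d) (Fin d) ℂ).mulVec e₀) :=
  Continuous.matrix_mulVec continuous_subtype_val continuous_const

lemma mono4_integrable (μ : Measure (Matrix.unitaryGroup (Fin d) ℂ))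
    [IsProbabilityMeasure μ] (e₀ : Fin d → ℂ) (i j k l : Fin d) :
    Integrable (fun U : Matrix.unitaryGroup (Fin d) ℂ =>
      mono4 i j k l ((U : Matrix (Fin d) (Fin d) ℂ).mulVec e₀)) μ := by
  have hb : ∀ (U : Matrix.unitaryGroup (Fin d) ℂ) (i : Fin d),
      ‖(U : Matrix (Fin d) (Fin d) ℂ).mulVec e₀ i‖ ≤ ∑ j, ‖e₀ j‖ := by
    intro U i
    unfold Matrix.mulVec dotProduct
    refine (norm_sum_le _ _).trans (Finset.sum_le_sum fun j _ => ?_)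
    rw [norm_mul]
    exact mul_le_of_le_one_left (norm_nonneg _) (entry_norm_bound_of_unitary U.2 i j)
  set C := ∑ j, ‖e₀ j‖
  have hC : 0 ≤ C := Finset.sum_nonneg fun _ _ => norm_nonneg _
  refine Integrable.of_bound
    ((mono4_cont i j k l).comp (psi_cont e₀)).aestronglyMeasurable (C * C * (C * C)) ?_
  refine Filter.Eventually.of_forall fun U => ?_
  simp only [mono4, norm_mul, norm_star]
  have := hb U
  gcongr <;> apply hb

/-- fourth moments -/
noncomputable def mom4 (μ : Measure (Matrix.unitaryGroup (Fin d) ℂ)) (e₀ : Fin d → ℂ)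
    (i j k l : Fin d) : ℂ :=
  ∫ U : Matrix.unitaryGroup (Fin d) ℂ,
    mono4 i j k l ((U : Matrix (Fin d) (Fin d) ℂ).mulVec e₀) ∂μ

lemma mom4_inv (μ : Measure (Matrix.unitaryGroup (Fin d) ℂ)) [μ.IsMulLeftInvariant]
    (e₀ : Fin d → ℂ) (i j k l : Fin d) (V : Matrix.unitaryGroup (Fin d) ℂ) :
    mom4 μ e₀ i j k l = ∫ U : Matrix.unitaryGroup (Fin d) ℂ, mono4 i j k l
      ((V : Matrix (Fin d) (Fin d) ℂ).mulVec ((U : Matrix (Fin d) (Fin d) ℂ).mulVec e₀)) ∂μ := by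
  unfold mom4
  rw [← integral_mul_left_eq_self _ V]
  simp only [Matrix.mulVec_mulVec]
  rfl

lemma mom4_phase (μ : Measure (Matrix.unitaryGroup (Fin d) ℂ)) [μ.IsMulLeftInvariant]
    (e₀ : Fin d → ℂ) (i j k l m : Fin d) :
    mom4 μ e₀ i j k l = mono4 i j k l (fun x => if x = m then Complex.I else 1) *
      mom4 μ e₀ i j k l := by
  have hV : Matrix.diagonal (fun x => if x = m then Complex.I else 1) ∈
      Matrix.unitaryGroup (Fin d) ℂ := by
    rw [Matrix.mem_unitaryGroup_iff', Matrix.star_eq_conjTranspose, Matrix.diagonal_conjTranspose,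
      Matrix.diagonal_mul_diagonal, ← Matrix.diagonal_one]
    congr 1
    funext x
    by_cases h : x = m <;> simp [h]
  conv_lhs => rw [mom4_inv μ e₀ i j k l ⟨_, hV⟩]
  unfold mom4
  rw [← integral_const_mul]
  congr 1
  funext U
  simp only [mono4, Matrix.mulVec_diagonal, star_mul']
  ring

lemma mom4_zero (μ : Measure (Matrix.unitaryGroup (Fin d) ℂ)) [μ.IsMulLeftInvariant]
    (e₀ : Fin d → ℂ) (i j k l : Fin d) (h1 : ¬ (i = j ∧ k = l)) (h2 : ¬ (i = l ∧ k = j)) :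
    mom4 μ e₀ i j k l = 0 := by
  have key : ∀ m, mono4 i j k l (fun x => if x = m then Complex.I else 1) ≠ 1 →
      mom4 μ e₀ i j k l = 0 := by
    intro m hm
    by_contra hne
    exact hm (mul_right_cancel₀ hne (by rw [one_mul]; exact (mom4_phase μ e₀ i j k l m).symm))
  have hI : Complex.I ≠ 1 := fun h => by simpa using congrArg Complex.im h
  have hI' : -Complex.I ≠ 1 := fun h => by simpa using congrArg Complex.im h
  have hI2 : (-1 : ℂ) ≠ 1 := by norm_num
  by_cases a1 : i = j
  · subst a1
    have hkl : k ≠ l := fun h => h1 ⟨rfl, h⟩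
    apply key k
    by_cases a2 : i = k
    · subst a2; simp [mono4, hkl.symm, hI']
    · simp [mono4, hkl.symm, a2, hI']
  · by_cases a3 : i = l
    · subst a3
      have hkj : k ≠ j := fun h => h2 ⟨rfl, h⟩
      apply key k
      by_cases a2 : i = k
      · subst a2; simp [mono4, hkj.symm, hI']
      · simp [mono4, hkj.symm, a2, hI']
    · apply key i
      by_cases a2 : k = i
      · subst a2; simp [mono4, Ne.symm a1, Ne.symm a3, hI2]
      · simp [mono4, Ne.symm a1, Ne.symm a3, a2, hI']

lemma mom4_comm (μ : Measure (Matrix.unitaryGroup (Fin d) ℂ))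
    (e₀ : Fin d → ℂ) (i j k l : Fin d) : mom4 μ e₀ i j k l = mom4 μ e₀ i l k j := by
  unfold mom4 mono4
  congr 1; funext U; ring

lemma mom4_comm' (μ : Measure (Matrix.unitaryGroup (Fin d) ℂ))
    (e₀ : Fin d → ℂ) (i j k l : Fin d) : mom4 μ e₀ i j k l = mom4 μ e₀ k j i l := by
  unfold mom4 mono4
  congr 1; funext U; ring

/-- a rational reflection mixing two coordinates -/
noncomputable def reflM (i j : Fin d) : Matrix (Fin d) (Fin d) ℂ :=
  1 - (2/5 : ℂ) • Matrix.vecMulVec (Pi.single i (1:ℂ) + Pi.single j (2:ℂ) : Fin d → ℂ)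
      (Pi.single i (1:ℂ) + Pi.single j (2:ℂ) : Fin d → ℂ)

lemma refl_mem (i j : Fin d) (hij : i ≠ j) :
    (reflM i j) ∈ Matrix.unitaryGroup (Fin d) ℂ := by
  unfold reflM
  set v : Fin d → ℂ := Pi.single i (1:ℂ) + Pi.single j (2:ℂ) with hv
  have hs : star v = v := by
    funext x
    simp only [hv, Pi.star_apply, Pi.add_apply, Pi.single_apply]
    split_ifs <;> simp
  have hvv : v ⬝ᵥ v = 5 := by
    simp [hv, add_dotProduct, hij, hij.symm]
    norm_num
  have hm : Matrix.vecMulVec v v * Matrix.vecMulVec v v = (5:ℂ) • Matrix.vecMulVec v v := by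
    rw [Matrix.vecMulVec_mul_vecMulVec, hvv]
    ext; simp [Matrix.vecMulVec_apply]; ring
  have hst : star (Matrix.vecMulVec v v) = Matrix.vecMulVec v v := by
    rw [Matrix.star_eq_conjTranspose, Matrix.conjTranspose_vecMulVec, hs]
  rw [Matrix.mem_unitaryGroup_iff', star_sub, star_smul, star_one, hst]
  have : star (2/5 : ℂ) = 2/5 := by simp
  simp only [this, sub_mul, mul_sub, smul_mul_smul_comm, hm, one_mul, mul_one, smul_smul]
  module

lemma mom4_refl (μ : Measure (Matrix.unitaryGroup (Fin d) ℂ)) [IsProbabilityMeasure μ]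
    [μ.IsMulLeftInvariant] (e₀ : Fin d → ℂ) (i j : Fin d) (hij : i ≠ j) (m : Fin d) (p q : ℂ)
    (hp : star p = p) (hq : star q = q)
    (hpq : ∀ x : Fin d → ℂ, (reflM i j).mulVec x m = p * x i + q * x j) :
    mom4 μ e₀ m m m m = p^4 * mom4 μ e₀ i i i i + q^4 * mom4 μ e₀ j j j j
      + 4 * p^2 * q^2 * mom4 μ e₀ i i j j := by
  have hexp : ∀ x : Fin d → ℂ, star (p * x i + q * x j) * (p * x i + q * x j) *
      (star (p * x i + q * x j) * (p * x i + q * x j)) =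
      ∑ a : Fin 2, ∑ b : Fin 2, ∑ c : Fin 2, ∑ e : Fin 2,
        (![p, q] a * ![p, q] b * ![p, q] c * ![p, q] e) *
          mono4 (![i, j] a) (![i, j] b) (![i, j] c) (![i, j] e) x := by
    intro x
    simp only [Fin.sum_univ_two, mono4, star_add, star_mul', hp, hq, Matrix.cons_val_zero,
      Matrix.cons_val_one]
    ring
  rw [mom4_inv μ e₀ m m m m ⟨_, refl_mem i j hij⟩]
  have : (fun U : Matrix.unitaryGroup (Fin d) ℂ => mono4 m m m m
      ((reflM i j).mulVec
        ((U : Matrix (Fin d) (Fin d) ℂ).mulVec e₀))) = fun U : Matrix.unitaryGroup (Fin d) ℂ =>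
      ∑ a : Fin 2, ∑ b : Fin 2, ∑ c : Fin 2, ∑ e : Fin 2,
        (![p, q] a * ![p, q] b * ![p, q] c * ![p, q] e) *
          mono4 (![i, j] a) (![i, j] b) (![i, j] c) (![i, j] e)
            ((U : Matrix (Fin d) (Fin d) ℂ).mulVec e₀) := by
    funext U
    rw [← hexp]
    simp only [mono4, hpq]
  simp only [this]
  have hint : ∀ a b c e : Fin 2, Integrable (fun U : Matrix.unitaryGroup (Fin d) ℂ =>
      (![p, q] a * ![p, q] b * ![p, q] c * ![p, q] e) *
          mono4 (![i, j] a) (![i, j] b) (![i, j] c) (![i, j] e)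
            ((U : Matrix (Fin d) (Fin d) ℂ).mulVec e₀)) μ := fun a b c e =>
    (mono4_integrable μ e₀ _ _ _ _).const_mul _
  rw [integral_finsetSum _ (fun a _ => integrable_finsetSum _ fun b _ => integrable_finsetSum _
    fun c _ => integrable_finsetSum _ fun e _ => hint a b c e)]
  simp_rw [fun a => integral_finsetSum (μ := μ) _ (fun b (_ : b ∈ Finset.univ) =>
    integrable_finsetSum _ fun c (_ : c ∈ Finset.univ) => integrable_finsetSum _
    fun e (_ : e ∈ Finset.univ) => hint a b c e)]
  simp_rw [fun a b => integral_finsetSum (μ := μ) _ (fun c (_ : c ∈ Finset.univ) =>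
    integrable_finsetSum _ fun e (_ : e ∈ Finset.univ) => hint a b c e)]
  simp_rw [fun a b c => integral_finsetSum (μ := μ) _ (fun e (_ : e ∈ Finset.univ) =>
    hint a b c e)]
  simp_rw [integral_const_mul]
  change (∑ a : Fin 2, ∑ b : Fin 2, ∑ c : Fin 2, ∑ e : Fin 2,
        (![p, q] a * ![p, q] b * ![p, q] c * ![p, q] e) *
          mom4 μ e₀ (![i, j] a) (![i, j] b) (![i, j] c) (![i, j] e)) = _
  simp only [Fin.sum_univ_two, Matrix.cons_val_zero, Matrix.cons_val_one]
  have z : ∀ a b c e : Fin d, ¬ (a = b ∧ c = e) → ¬ (a = e ∧ c = b) → mom4 μ e₀ a b c e = 0 :=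
    mom4_zero μ e₀
  have hji := hij.symm
  rw [z i i i j, z i i j i, z i j i i, z j i i i, z j j j i, z j j i j, z j i j j, z i j j j,
    z i j i j, z j i j i, mom4_comm μ e₀ i j j i, mom4_comm' μ e₀ j j i i,
    mom4_comm μ e₀ i j j i, mom4_comm μ e₀ j i i j, mom4_comm' μ e₀ j j i i,
    mom4_comm μ e₀ i j j i]
  · ring
  all_goals simp [hij, hji]

lemma mom4_rel (μ : Measure (Matrix.unitaryGroup (Fin d) ℂ)) [IsProbabilityMeasure μ]
    [μ.IsMulLeftInvariant] (e₀ : Fin d → ℂ) (i j : Fin d) (hij : i ≠ j) :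
    mom4 μ e₀ i i i i = mom4 μ e₀ j j j j ∧ mom4 μ e₀ i i i i = 2 * mom4 μ e₀ i i j j := by
  have hval : ∀ (m : Fin d) (x : Fin d → ℂ),
      (reflM i j).mulVec x m =
      x m - 2/5 * ((Pi.single i (1:ℂ) + Pi.single j (2:ℂ) : Fin d → ℂ) m * (x i + 2 * x j)) := by
    intro m x
    rw [reflM, Matrix.sub_mulVec, Matrix.smul_mulVec, Matrix.vecMulVec_mulVec]
    simp [add_dotProduct]
    ring
  have h1 := mom4_refl μ e₀ i j hij i (3/5) (-4/5) (by simp) (by simp) (by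
    intro x; rw [hval]; simp [hij]; ring)
  have h2 := mom4_refl μ e₀ i j hij j (-4/5) (-3/5) (by simp) (by simp) (by
    intro x; rw [hval]; simp [hij.symm]; ring)
  have h3 : mom4 μ e₀ i i i i = mom4 μ e₀ j j j j := by
    linear_combination (25/32) * h1 - (25/32) * h2
  refine ⟨h3, ?_⟩
  rw [← h3] at h1
  linear_combination (625/288) * h1

lemma mom4_eq (μ : Measure (Matrix.unitaryGroup (Fin d) ℂ)) [IsProbabilityMeasure μ]
    [μ.IsMulLeftInvariant] (e₀ : Fin d → ℂ) (o i j k l : Fin d) :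
    mom4 μ e₀ i j k l = mom4 μ e₀ o o o o / 2 *
      ((if i = j then if k = l then 1 else 0 else 0)
        + (if i = l then if k = j then 1 else 0 else 0)) := by
  have hd : ∀ i, mom4 μ e₀ i i i i = mom4 μ e₀ o o o o := by
    intro i
    by_cases h : i = o
    · rw [h]
    · exact (mom4_rel μ e₀ i o h).1
  have ho : ∀ i k, i ≠ k → mom4 μ e₀ i i k k = mom4 μ e₀ o o o o / 2 := by
    intro i k h
    rw [← hd i, (mom4_rel μ e₀ i k h).2]; ring
  by_cases h1 : i = j ∧ k = l
  · obtain ⟨rfl, rfl⟩ := h1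
    by_cases h : i = k
    · subst h; simp only [hd i, if_true]; ring
    · simp [h, ho i k h]
  · by_cases h2 : i = l ∧ k = j
    · obtain ⟨rfl, rfl⟩ := h2
      have h : i ≠ k := fun h => h1 ⟨h, h.symm⟩
      rw [mom4_comm]
      simp [h, ho i k h]
    · rw [mom4_zero μ e₀ i j k l h1 h2]
      simp only [← ite_and, h1, h2]
      simp

lemma quad_integral (μ : Measure (Matrix.unitaryGroup (Fin d) ℂ)) [IsProbabilityMeasure μ]
    (e₀ : Fin d → ℂ) (M : Matrix (Fin d) (Fin d) ℂ) :
    (∫ U : Matrix.unitaryGroup (Fin d) ℂ,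
        (star ((U : Matrix (Fin d) (Fin d) ℂ).mulVec e₀)
          ⬝ᵥ M.mulVec ((U : Matrix (Fin d) (Fin d) ℂ).mulVec e₀)) ^ 2 ∂μ)
      = ∑ i, ∑ j, ∑ k, ∑ l, M i j * M k l * mom4 μ e₀ i j k l := by
  have hexp : ∀ x : Fin d → ℂ, (star x ⬝ᵥ M.mulVec x) ^ 2 =
      ∑ i, ∑ j, ∑ k, ∑ l, M i j * M k l * mono4 i j k l x := by
    intro x
    have : star x ⬝ᵥ M.mulVec x = ∑ i, ∑ j, M i j * (star (x i) * x j) := by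
      simp only [dotProduct, Matrix.mulVec, Finset.mul_sum, Pi.star_apply]
      refine Finset.sum_congr rfl fun i _ => Finset.sum_congr rfl fun j _ => ?_
      ring
    rw [this, sq, Finset.sum_mul]
    refine Finset.sum_congr rfl fun i _ => ?_
    rw [Finset.sum_mul]
    refine Finset.sum_congr rfl fun j _ => ?_
    rw [Finset.mul_sum]
    refine Finset.sum_congr rfl fun k _ => ?_
    rw [Finset.mul_sum]
    refine Finset.sum_congr rfl fun l _ => ?_
    unfold mono4
    ring
  simp_rw [hexp]
  have hint : ∀ i j k l : Fin d, Integrable (fun U : Matrix.unitaryGroup (Fin d) ℂ =>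
      M i j * M k l * mono4 i j k l ((U : Matrix (Fin d) (Fin d) ℂ).mulVec e₀)) μ :=
    fun a b c e => (mono4_integrable μ e₀ _ _ _ _).const_mul _
  rw [integral_finsetSum _ (fun a _ => integrable_finsetSum _ fun b _ => integrable_finsetSum _
    fun c _ => integrable_finsetSum _ fun e _ => hint a b c e)]
  refine Finset.sum_congr rfl fun a _ => ?_
  rw [integral_finsetSum _ (fun b _ => integrable_finsetSum _
    fun c _ => integrable_finsetSum _ fun e _ => hint a b c e)]
  refine Finset.sum_congr rfl fun b _ => ?_
  rw [integral_finsetSum _ (fun c _ => integrable_finsetSum _ fun e _ => hint a b c e)]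
  refine Finset.sum_congr rfl fun c _ => ?_
  rw [integral_finsetSum _ (fun e _ => hint a b c e)]
  refine Finset.sum_congr rfl fun e _ => ?_
  rw [integral_const_mul]
  rfl

lemma quad_value (μ : Measure (Matrix.unitaryGroup (Fin d) ℂ)) [IsProbabilityMeasure μ]
    [μ.IsMulLeftInvariant] (e₀ : Fin d → ℂ) (o : Fin d) (M : Matrix (Fin d) (Fin d) ℂ) :
    (∫ U : Matrix.unitaryGroup (Fin d) ℂ,
        (star ((U : Matrix (Fin d) (Fin d) ℂ).mulVec e₀)
          ⬝ᵥ M.mulVec ((U : Matrix (Fin d) (Fin d) ℂ).mulVec e₀)) ^ 2 ∂μ)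
      = mom4 μ e₀ o o o o / 2 * (M.trace ^ 2 + (M * M).trace) := by
  rw [quad_integral]
  have hc := mom4_eq μ e₀ o
  generalize mom4 μ e₀ o o o o / 2 = c at hc ⊢
  simp_rw [hc]
  have e1 : M.trace ^ 2 = ∑ i, ∑ j, ∑ k, ∑ l,
      M i j * M k l * (if i = j then if k = l then 1 else 0 else 0) := by
    have : ∀ i j k l : Fin d, M i j * M k l * (if i = j then if k = l then (1:ℂ) else 0 else 0)
        = (if i = j then M i j else 0) * (if k = l then M k l else 0) := by
      intro i j k l
      split_ifs <;> simp
    simp_rw [this, ← Finset.mul_sum, ← Finset.sum_mul]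
    simp [Matrix.trace, sq]
  have e2 : (M * M).trace = ∑ i, ∑ j, ∑ k, ∑ l,
      M i j * M k l * (if i = l then if k = j then 1 else 0 else 0) := by
    simp [Matrix.trace, Matrix.mul_apply, mul_ite]
  rw [e1, e2]
  simp only [← Finset.sum_add_distrib, Finset.mul_sum]
  refine Finset.sum_congr rfl fun i _ => Finset.sum_congr rfl fun j _ =>
    Finset.sum_congr rfl fun k _ => Finset.sum_congr rfl fun l _ => ?_
  ring

end helpers

/-- Second moment of `⟨ψ|M|ψ⟩` for a Haar-random pure state `ψ = U e₀` in `ℂ^d`: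
`E[⟨ψ|M|ψ⟩²] = ((Tr M)² + Tr(M²))/(d(d+1))`.  The Haar probability measure on
`U(d)` is any left-invariant Borel probability measure. -/
theorem stmt_12 (d : ℕ) (hd : 1 ≤ d) (M : Matrix (Fin d) (Fin d) ℂ)
    [MeasurableSpace (Matrix.unitaryGroup (Fin d) ℂ)]
    [BorelSpace (Matrix.unitaryGroup (Fin d) ℂ)]
    (μ : Measure (Matrix.unitaryGroup (Fin d) ℂ))
    [IsProbabilityMeasure μ] [μ.IsMulLeftInvariant]
    (e₀ : Fin d → ℂ) (he₀ : star e₀ ⬝ᵥ e₀ = 1) :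
    (∫ U : Matrix.unitaryGroup (Fin d) ℂ,
        (star ((U : Matrix (Fin d) (Fin d) ℂ).mulVec e₀)
          ⬝ᵥ M.mulVec ((U : Matrix (Fin d) (Fin d) ℂ).mulVec e₀)) ^ 2 ∂μ)
      = (M.trace ^ 2 + (M * M).trace) / (d * (d + 1)) := by
  have o : Fin d := ⟨0, hd⟩
  have h1 := quad_value μ e₀ o 1
  have hnorm : ∀ U : Matrix.unitaryGroup (Fin d) ℂ,
      (star ((U : Matrix (Fin d) (Fin d) ℂ).mulVec e₀)
          ⬝ᵥ (1 : Matrix (Fin d) (Fin d) ℂ).mulVec ((U : Matrix (Fin d) (Fin d) ℂ).mulVec e₀)) = 1 := by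
    intro U
    rw [Matrix.one_mulVec, Matrix.star_mulVec, ← Matrix.dotProduct_mulVec, Matrix.mulVec_mulVec,
      ← Matrix.star_eq_conjTranspose, Matrix.mem_unitaryGroup_iff'.1 U.2, Matrix.one_mulVec, he₀]
  simp only [hnorm] at h1
  simp at h1
  rw [quad_value μ e₀ o M]
  have hd0 : (d : ℂ) ≠ 0 := by exact_mod_cast (by omega : d ≠ 0)
  have hd1 : (d : ℂ) + 1 ≠ 0 := by exact_mod_cast (by omega : d + 1 ≠ 0)
  rw [eq_div_iff (mul_ne_zero hd0 hd1)]
  linear_combination (-(M.trace ^ 2 + (M * M).trace)) * h1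
end
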